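/- arXiv:2211.14678 — 3 statements merged into one kernel-verified Lean document; each statement's English description precedes it below -/
import Mathlib

section
/- Let k = 2d with d ≥ 1. For every π ∈ S_k, ν(π) = 2 if and only if the equivalence relation ∼_π has exactly one equivalence class on [k]. -/
/-- `π` and `τ` are related by a prefix reversal: there is `t ≤ k` such that the first `t`
entries are reversed and the remaining entries agree (0-indexed form of the paper's
1-indexed definition). -/
def PrefixRev (k : ℕ) (π τ : Equiv.Perm (Fin k)) : Prop :=
  ∃ t : ℕ, ∃ ht : t ≤ k,
    (∀ i : Fin k, t ≤ (i : ℕ) → π i = τ i) ∧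
    (∀ i : Fin k, ∀ hi : (i : ℕ) < t, π i = τ ⟨t - 1 - (i : ℕ), by omega⟩)

/-- `π` and `τ` are related by a suffix reversal: there is `t` such that the entries at
positions `< t` agree and the remaining entries are reversed. -/
def SuffixRev (k : ℕ) (π τ : Equiv.Perm (Fin k)) : Prop :=
  ∃ t : ℕ,
    (∀ i : Fin k, (i : ℕ) < t → π i = τ i) ∧
    (∀ i : Fin k, ∀ hi : t ≤ (i : ℕ), π i = τ ⟨k - 1 - (i : ℕ) + t, by
      have := i.isLt; omega⟩)

/-- The pancake graph `P_k`, whose edges are prefix reversals. -/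
def pancakeGraph (k : ℕ) : SimpleGraph (Equiv.Perm (Fin k)) :=
  SimpleGraph.fromRel (PrefixRev k)

/-- The graph `G_k`, whose edges are prefix and suffix reversals. -/
def prefixSuffixGraph (k : ℕ) : SimpleGraph (Equiv.Perm (Fin k)) :=
  SimpleGraph.fromRel (fun π τ => PrefixRev k π τ ∨ SuffixRev k π τ)

/-- The values of `π` at positions `p` and `q` differ by `1`, or are `{1, k}`
(1-indexed), i.e. `{0, k - 1}` in this 0-indexed formalization. -/
def PiAdjacency (k : ℕ) (π : Equiv.Perm (Fin k)) (p q : Fin k) : Prop :=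
  (((π p : ℕ) : ℤ) - ((π q : ℕ) : ℤ)).natAbs = 1 ∨
    ({(π p : ℕ), (π q : ℕ)} : Set ℕ) = {0, k - 1}

/-- Positions `i` and `i + 1` (0-indexed) form a `π`-adjacency. -/
def PosAdjacency (k : ℕ) (π : Equiv.Perm (Fin k)) (i : ℕ) : Prop :=
  ∃ h : i + 1 < k, PiAdjacency k π ⟨i, by omega⟩ ⟨i + 1, h⟩

/-- The equivalence relation `∼_π`: `a ∼_π b` iff every pair of consecutive positions
between the position of `a` and the position of `b` is a `π`-adjacency. -/
def Sim (k : ℕ) (π : Equiv.Perm (Fin k)) (a b : Fin k) : Prop :=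
  ∀ i : ℕ, min ((π.symm a : ℕ)) ((π.symm b : ℕ)) ≤ i →
    i < max ((π.symm a : ℕ)) ((π.symm b : ℕ)) → PosAdjacency k π i

/-- `∼_π` has exactly one equivalence class on `[k]`. -/
def OneClass (k : ℕ) (π : Equiv.Perm (Fin k)) : Prop :=
  ∀ a b : Fin k, Sim k π a b

/-- The pairing `φ(j) = j + o_j`, swapping `2i - 1 ↔ 2i` (1-indexed),
i.e. `2i ↔ 2i + 1` (0-indexed). -/
def partner (d : ℕ) (j : Fin (2 * d)) : Fin (2 * d) :=
  ⟨if (j : ℕ) % 2 = 0 then (j : ℕ) + 1 else (j : ℕ) - 1, by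
    have := j.isLt; split <;> omega⟩

/-- The equivalence relation `≈_π`. -/
def ApproxSim (d : ℕ) (π : Equiv.Perm (Fin (2 * d))) (a b : Fin (2 * d)) : Prop :=
  a = b ∨ (Sim (2 * d) π a b ∧ Sim (2 * d) π a (partner d a) ∧
    Sim (2 * d) π b (partner d b))

/-- `j` is free, i.e. `{j}` is an equivalence class (a singleton) of `≈_π`. -/
def IsFree (d : ℕ) (π : Equiv.Perm (Fin (2 * d))) (j : Fin (2 * d)) : Prop :=
  ∀ j' : Fin (2 * d), ApproxSim d π j j' → j' = j

/-- The `≈_π`-equivalence class of `j`, as a finite set. -/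
noncomputable def classOf (d : ℕ) (π : Equiv.Perm (Fin (2 * d))) (j : Fin (2 * d)) :
    Finset (Fin (2 * d)) :=
  @Finset.filter _ (fun j' => ApproxSim d π j j') (Classical.decPred _) Finset.univ

/-- `S(π)`, the number of singletons of `π`. -/
noncomputable def numSingletons (d : ℕ) (π : Equiv.Perm (Fin (2 * d))) : ℕ :=
  (@Finset.filter _ (fun j => IsFree d π j) (Classical.decPred _) Finset.univ).card

/-- `B(π)`, the number of blocks (equivalence classes of `≈_π` of size `> 1`) of `π`. -/
noncomputable def numBlocks (d : ℕ) (π : Equiv.Perm (Fin (2 * d))) : ℕ :=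
  ((Finset.univ.image (classOf d π)).filter (fun C => 1 < C.card)).card

/-- The potential function `ν(π) = (3/2) S(π) + 2 B(π)`. -/
noncomputable def nu (d : ℕ) (π : Equiv.Perm (Fin (2 * d))) : ℚ :=
  3 / 2 * (numSingletons d π : ℚ) + 2 * (numBlocks d π : ℚ)

/-- The unique element of `[k]` congruent to `j - o_j` modulo `k` (0-indexed form). -/
def prevVal (d : ℕ) (j : Fin (2 * d)) : Fin (2 * d) :=
  ⟨if (j : ℕ) % 2 = 0 then ((j : ℕ) + 2 * d - 1) % (2 * d) else ((j : ℕ) + 1) % (2 * d), by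
    have := j.isLt; split <;> exact Nat.mod_lt _ (by omega)⟩

/-!
Clearing denominators, `ν(π) = 2` reads `3 S(π) + 4 B(π) = 4`, whose only solution in natural
numbers is `S(π) = 0`, `B(π) = 1`; that is, no element is free and `≈_π` has a single class.
Since `≈_π` refines `∼_π`, the latter then has a single class as well. Conversely, if `∼_π` has
a single class, every `j` is related to `φ(j) ≠ j`, so nothing is free and `≈_π` coincides
with `∼_π`.
-/

section Relations

variable {k d : ℕ} {π : Equiv.Perm (Fin k)} {ρ : Equiv.Perm (Fin (2 * d))}

theorem Sim.refl (a : Fin k) : Sim k π a a := by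
  intro i hmin hmax
  rw [min_self] at hmin
  rw [max_self] at hmax
  exact absurd hmax hmin.not_gt

theorem Sim.symm {a b : Fin k} (h : Sim k π a b) : Sim k π b a := by
  intro i hmin hmax
  rw [min_comm] at hmin
  rw [max_comm] at hmax
  exact h i hmin hmax

theorem partner_ne (j : Fin (2 * d)) : partner d j ≠ j := by
  simp only [ne_eq, Fin.ext_iff, partner]
  split <;> omega

theorem partner_partner (j : Fin (2 * d)) : partner d (partner d j) = j := by
  simp only [Fin.ext_iff, partner]
  split <;> split <;> omega

theorem ApproxSim.refl (a : Fin (2 * d)) : ApproxSim d ρ a a :=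
  Or.inl rfl

theorem ApproxSim.sim {a b : Fin (2 * d)} (h : ApproxSim d ρ a b) : Sim (2 * d) ρ a b := by
  rcases h with rfl | ⟨hab, -, -⟩
  · exact Sim.refl a
  · exact hab

theorem not_isFree_of_sim_partner {j : Fin (2 * d)} (h : Sim (2 * d) ρ j (partner d j)) :
    ¬ IsFree d ρ j := by
  intro hfree
  have hpartner : Sim (2 * d) ρ (partner d j) (partner d (partner d j)) := by
    rw [partner_partner]
    exact h.symm
  exact partner_ne j (hfree _ (Or.inr ⟨h, h, hpartner⟩))

theorem oneClass_iff_approxSim :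
    OneClass (2 * d) ρ ↔ ∀ a b, ApproxSim d ρ a b :=
  ⟨fun h _ _ => Or.inr ⟨h _ _, h _ _, h _ _⟩, fun h a b => (h a b).sim⟩

end Relations

section Counting

variable {d : ℕ} {π : Equiv.Perm (Fin (2 * d))}

theorem mem_classOf {a b : Fin (2 * d)} : b ∈ classOf d π a ↔ ApproxSim d π a b := by
  simp [classOf]

theorem one_lt_card_classOf {j : Fin (2 * d)} (h : ¬ IsFree d π j) :
    1 < (classOf d π j).card := by
  obtain ⟨j', hj', hne⟩ : ∃ j', ApproxSim d π j j' ∧ j' ≠ j := by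
    simpa [IsFree] using h
  exact Finset.one_lt_card.2
    ⟨j', mem_classOf.2 hj', j, mem_classOf.2 (ApproxSim.refl j), hne⟩

theorem numSingletons_eq_zero_iff : numSingletons d π = 0 ↔ ∀ j, ¬ IsFree d π j := by
  simp [numSingletons, Finset.filter_eq_empty_iff]

theorem numBlocks_eq_card_image_classOf (h : ∀ j, ¬ IsFree d π j) :
    numBlocks d π = (Finset.univ.image (classOf d π)).card := by
  rw [numBlocks, Finset.filter_true_of_mem]
  exact Finset.forall_mem_image.2 fun j _ => one_lt_card_classOf (h j)

theorem card_image_classOf_eq_one_iff (hd : 1 ≤ d) :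
    (Finset.univ.image (classOf d π)).card = 1 ↔ ∀ a b, ApproxSim d π a b := by
  constructor
  · intro hcard a b
    have hclass : classOf d π a = classOf d π b :=
      Finset.card_le_one.1 hcard.le _ (Finset.mem_image_of_mem _ (Finset.mem_univ a))
        _ (Finset.mem_image_of_mem _ (Finset.mem_univ b))
    rw [← mem_classOf, hclass, mem_classOf]
    exact ApproxSim.refl b
  · intro h
    have hconst : classOf d π = fun _ => Finset.univ :=
      funext fun a => Finset.eq_univ_of_forall fun b => mem_classOf.2 (h a b)
    have hne : (Finset.univ : Finset (Fin (2 * d))).Nonempty := ⟨⟨0, by omega⟩, Finset.mem_univ _⟩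
    rw [hconst, Finset.image_const hne, Finset.card_singleton]

theorem nu_eq_two_iff : nu d π = 2 ↔ numSingletons d π = 0 ∧ numBlocks d π = 1 := by
  have hclear : nu d π = 2 ↔ 3 * numSingletons d π + 4 * numBlocks d π = 4 := by
    rw [← Nat.cast_inj (R := ℚ), nu]
    push_cast
    constructor <;> intro h <;> linarith
  rw [hclear]
  omega

end Counting

/-- Let `k = 2d` with `d ≥ 1`. For every `π ∈ S_k`, `ν(π) = 2` iff
`∼_π` has exactly one equivalence class on `[k]`. -/
theorem statement_7 (d : ℕ) (hd : 1 ≤ d) (π : Equiv.Perm (Fin (2 * d))) :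
    nu d π = 2 ↔ OneClass (2 * d) π := by
  rw [nu_eq_two_iff, numSingletons_eq_zero_iff, oneClass_iff_approxSim]
  constructor
  · rintro ⟨hfree, hblocks⟩
    rw [numBlocks_eq_card_image_classOf hfree] at hblocks
    exact (card_image_classOf_eq_one_iff hd).1 hblocks
  · intro h
    have hfree (j : Fin (2 * d)) : ¬ IsFree d π j :=
      not_isFree_of_sim_partner (h j (partner d j)).sim
    refine ⟨hfree, ?_⟩
    rw [numBlocks_eq_card_image_classOf hfree]
    exact (card_image_classOf_eq_one_iff hd).2 h
end

section
/- Let k ≥ 1 and σ ∈ S_k. If the equivalence relation ∼_σ has exactly one equivalence class on [k], then there exists t ∈ [k] such that either (i) σ(i) = t + 1 − i for all i ∈ [t] and σ(i) = k + t + 1 − i for all i with t < i ≤ k (i.e., σ = t, t−1, ..., 1, k, k−1, ..., t+1), or (ii) σ(i) = t + i for all i ∈ [k − t] and σ(i) = i − (k − t) for all i with k − t < i ≤ k (i.e., σ = t+1, t+2, ..., k, 1, 2, ..., t). -/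
/-!
Modulo `k`, a `σ`-adjacency says that consecutive values of `σ` differ by `±1`. Since `σ` is
injective, `σ (i + 2) ≠ σ i`, so the sign never changes: modulo `k`, either `σ i = σ 0 + i` for
all `i` or `σ i = σ 0 - i` for all `i`. Lifting these values to `{0, …, k - 1}` gives the two
shapes.
-/

section NonBacktrackingWalk

variable {G : Type*} [AddGroup G] {n : ℕ} {d : G}

theorem eq_add_nsmul_of_forall_succ_eq_add {f : Fin (n + 1) → G}
    (hstep : ∀ i : Fin n, f i.succ = f i.castSucc + d) (i : Fin (n + 1)) :
    f i = f 0 + (i : ℕ) • d := by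
  induction i using Fin.induction with
  | zero => simp
  | succ i ih =>
    rw [hstep, ih, Fin.val_castSucc, Fin.val_succ, succ_nsmul, add_assoc]

theorem forall_succ_eq_add_of_one_eq_add {f : Fin (n + 2) → G}
    (hstep : ∀ i : Fin (n + 1), f i.succ = f i.castSucc + d ∨ f i.succ = f i.castSucc + -d)
    (hback : ∀ i : Fin n, f i.succ.succ ≠ f i.castSucc.castSucc)
    (hstart : f 1 = f 0 + d) (i : Fin (n + 1)) :
    f i.succ = f i.castSucc + d := by
  induction i using Fin.induction with
  | zero => exact hstart
  | succ i ih =>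
    refine (hstep i.succ).resolve_right fun hturn => hback i ?_
    rw [hturn, ← Fin.succ_castSucc, ih, add_neg_cancel_right]

theorem eq_add_nsmul_or_eq_sub_nsmul_of_injective {f : Fin (n + 1) → G}
    (hf : Function.Injective f)
    (hstep : ∀ i : Fin n, f i.succ = f i.castSucc + d ∨ f i.succ = f i.castSucc + -d) :
    (∀ i, f i = f 0 + (i : ℕ) • d) ∨ (∀ i, f i = f 0 - (i : ℕ) • d) := by
  cases n with
  | zero => exact Or.inl (eq_add_nsmul_of_forall_succ_eq_add finZeroElim)
  | succ n =>
    have hback (i : Fin n) : f i.succ.succ ≠ f i.castSucc.castSucc :=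
      hf.ne (Fin.ne_of_val_ne (by simp only [Fin.val_succ, Fin.val_castSucc]; omega))
    rcases hstep 0 with hup | hdown
    · exact Or.inl (eq_add_nsmul_of_forall_succ_eq_add
        (forall_succ_eq_add_of_one_eq_add hstep hback hup))
    · have hstep_neg (i : Fin (n + 1)) :
          f i.succ = f i.castSucc + -d ∨ f i.succ = f i.castSucc + - -d := by
        simpa only [neg_neg] using (hstep i).symm
      have hsum := eq_add_nsmul_of_forall_succ_eq_add
        (forall_succ_eq_add_of_one_eq_add hstep_neg hback hdown)
      exact Or.inr fun i => by rw [hsum, neg_nsmul, sub_eq_add_neg]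

end NonBacktrackingWalk

section CyclicAdjacency

variable {n : ℕ} {σ : Equiv.Perm (Fin (n + 1))}

theorem piAdjacency_iff_eq_add_one_or_eq_add_neg_one {p q : Fin (n + 1)} :
    PiAdjacency (n + 1) σ p q ↔ σ q = σ p + 1 ∨ σ q = σ p + -1 := by
  rw [← sub_eq_add_neg, eq_sub_iff_add_eq, PiAdjacency, Set.pair_eq_pair_iff]
  simp only [Fin.ext_iff, Fin.val_add_one, Fin.val_last]
  split_ifs <;> omega

theorem piAdjacency_castSucc_succ_of_oneClass (hone : OneClass (n + 1) σ) (i : Fin n) :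
    PiAdjacency (n + 1) σ i.castSucc i.succ := by
  obtain ⟨_, hadj⟩ := hone (σ i.castSucc) (σ i.succ) i (by simp) (by simp)
  exact hadj

open scoped Fin.CommRing in
theorem eq_add_or_eq_sub_of_oneClass (hone : OneClass (n + 1) σ) :
    (∀ i, σ i = σ 0 + i) ∨ (∀ i, σ i = σ 0 - i) := by
  have hstep (i : Fin n) :=
    piAdjacency_iff_eq_add_one_or_eq_add_neg_one.mp (piAdjacency_castSucc_succ_of_oneClass hone i)
  simpa only [nsmul_one, Fin.cast_val_eq_self] using
    eq_add_nsmul_or_eq_sub_nsmul_of_injective σ.injective hstep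

end CyclicAdjacency

section CyclicArithmetic

variable {n : ℕ}

theorem exists_forall_val_sub_eq (c : Fin (n + 1)) :
    ∃ t : ℕ, 1 ≤ t ∧ t ≤ n + 1 ∧
      (∀ i : Fin (n + 1), (i : ℕ) < t → ((c - i : Fin (n + 1)) : ℕ) = t - 1 - i) ∧
      (∀ i : Fin (n + 1), t ≤ (i : ℕ) → ((c - i : Fin (n + 1)) : ℕ) = n + 1 + t - 1 - i) := by
  refine ⟨c + 1, by omega, by omega, fun i hi => ?_, fun i hi => ?_⟩
  · rw [Fin.coe_sub_iff_le.mpr (by omega), Nat.add_sub_cancel]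
  · rw [Fin.coe_sub_iff_lt.mpr (by omega)]
    omega

theorem exists_forall_val_add_eq (c : Fin (n + 1)) :
    ∃ t : ℕ, 1 ≤ t ∧ t ≤ n + 1 ∧
      (∀ i : Fin (n + 1), (i : ℕ) < n + 1 - t → ((c + i : Fin (n + 1)) : ℕ) = t + i) ∧
      (∀ i : Fin (n + 1), n + 1 - t ≤ (i : ℕ) →
        ((c + i : Fin (n + 1)) : ℕ) = i - (n + 1 - t)) := by
  -- `t` is the representative of `c` modulo `n + 1` lying in `[1, n + 1]`.
  rcases eq_or_ne c 0 with rfl | hc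
  · exact ⟨n + 1, by simp⟩
  · have hpos : 0 < (c : ℕ) := Fin.pos_iff_ne_zero.mpr hc
    refine ⟨c, hpos, c.is_le', fun i hi => ?_, fun i hi => ?_⟩ <;>
      rw [Fin.val_add_eq_ite] <;> split_ifs <;> omega

end CyclicArithmetic

/-- Let `k ≥ 1` and `σ ∈ S_k`. If `∼_σ` has exactly one equivalence
class, then there is `t ∈ [k]` with either
`σ = t, t-1, …, 1, k, k-1, …, t+1` or `σ = t+1, t+2, …, k, 1, 2, …, t`
(stated 0-indexed: values and positions are shifted down by one). -/
theorem statement_15 (k : ℕ) (hk : 1 ≤ k) (σ : Equiv.Perm (Fin k))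
    (hone : OneClass k σ) :
    ∃ t : ℕ, 1 ≤ t ∧ t ≤ k ∧
      (((∀ i : Fin k, (i : ℕ) < t → (σ i : ℕ) = t - 1 - (i : ℕ)) ∧
        (∀ i : Fin k, t ≤ (i : ℕ) → (σ i : ℕ) = k + t - 1 - (i : ℕ))) ∨
       ((∀ i : Fin k, (i : ℕ) < k - t → (σ i : ℕ) = t + (i : ℕ)) ∧
        (∀ i : Fin k, k - t ≤ (i : ℕ) → (σ i : ℕ) = (i : ℕ) - (k - t)))) := by
  obtain ⟨n, rfl⟩ := Nat.exists_eq_add_of_le' hk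
  rcases eq_add_or_eq_sub_of_oneClass hone with hinc | hdec
  · obtain ⟨t, ht_pos, ht_le, hbefore, hafter⟩ := exists_forall_val_add_eq (σ 0)
    simp only [← hinc] at hbefore hafter
    exact ⟨t, ht_pos, ht_le, Or.inr ⟨hbefore, hafter⟩⟩
  · obtain ⟨t, ht_pos, ht_le, hbefore, hafter⟩ := exists_forall_val_sub_eq (σ 0)
    simp only [← hdec] at hbefore hafter
    exact ⟨t, ht_pos, ht_le, Or.inl ⟨hbefore, hafter⟩⟩
end

section
/- Let k ≥ 1. For π ∈ S_{k+1}, let ψ(π) ∈ S_k be the permutation whose sequence of values (ψ(π)(1), ..., ψ(π)(k)) is obtained from (π(1), ..., π(k+1)) by deleting the entry equal to k+1. If π, τ ∈ S_{k+1} are adjacent in G_{k+1}, then either ψ(π) = ψ(τ) or ψ(π) and ψ(τ) are adjacent in G_k. Consequently, d_{G_k}(ψ(π), ψ(τ)) ≤ d_{G_{k+1}}(π, τ) for all π, τ ∈ S_{k+1}. -/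
/-- `π' ∈ S_k` is obtained from `π ∈ S_{k+1}` by deleting the entry equal to `k + 1`
(the entry equal to `k` in this 0-indexed formalization) from its sequence of values. -/
def DeleteTop (k : ℕ) (π : Equiv.Perm (Fin (k + 1))) (π' : Equiv.Perm (Fin k)) : Prop :=
  (((List.finRange (k + 1)).map (fun i => (π i : ℕ))).filter (fun v => v != k)) =
    (List.finRange k).map (fun i => (π' i : ℕ))

/-!
Let `ρ` reverse the positions in the interval `[a, b)`. Deleting a position `p` from the word
`τ ∘ ρ` deletes position `ρ p` from `τ`, and what remains of `ρ` is again the reversal of an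
interval, whose endpoints are those of `[a, b)` shifted left by one where they lie beyond `p`.
This shift fixes the left end of the word and sends its right end to the right end of the shorter
word, so prefix reversals become prefix reversals and suffix reversals become suffix reversals
(possibly trivial ones). Hence `ψ` maps edges of `G_{k+1}` to edges or single vertices of `G_k`.
As `G_{k+1}` is connected, the image of a shortest walk bounds the distance.
-/

open Equiv

section Graph

theorem exists_walk_length_le_of_adj_imp {V W : Type*} {G : SimpleGraph V} {H : SimpleGraph W}
    {f : V → W} (hf : ∀ u v, G.Adj u v → f u = f v ∨ H.Adj (f u) (f v)) {u v : V}
    (w : G.Walk u v) : ∃ w' : H.Walk (f u) (f v), w'.length ≤ w.length := by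
  induction w with
  | nil => exact ⟨.nil, le_rfl⟩
  | cons huv w ih =>
    obtain ⟨w', hw'⟩ := ih
    rcases hf _ _ huv with heq | hadj
    · exact ⟨w'.copy heq.symm rfl, by simpa using hw'.trans (Nat.le_succ _)⟩
    · exact ⟨.cons hadj w', by simpa using hw'⟩

theorem dist_le_dist_of_adj_imp {V W : Type*} {G : SimpleGraph V} {H : SimpleGraph W}
    {f : V → W} (hf : ∀ u v, G.Adj u v → f u = f v ∨ H.Adj (f u) (f v)) {u v : V}
    (huv : G.Reachable u v) : H.dist (f u) (f v) ≤ G.dist u v := by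
  obtain ⟨w, hw⟩ := huv.exists_walk_length_eq_dist
  obtain ⟨w', hw'⟩ := exists_walk_length_le_of_adj_imp hf w
  exact hw ▸ (SimpleGraph.dist_le w').trans hw'

theorem preconnected_of_reachable_mul {M : Type*} [Group M] {G : SimpleGraph M} {S : Set M}
    (hS : Submonoid.closure S = ⊤) (hG : ∀ s ∈ S, ∀ x, G.Reachable x (x * s)) :
    G.Preconnected := by
  have reachable_mul (g x : M) : G.Reachable x (x * g) := by
    have hg : g ∈ Submonoid.closure S := hS ▸ Submonoid.mem_top g
    induction hg using Submonoid.closure_induction generalizing x with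
    | mem s hs => exact hG s hs x
    | one => rw [mul_one]
    | mul g h _ _ hg hh => exact mul_assoc x g h ▸ (hg x).trans (hh (x * g))
  intro x y
  simpa using reachable_mul (x⁻¹ * y) x

end Graph

section IntervalReversal

variable {n : ℕ}

/-- The permutation of the positions `0, …, n - 1` that reverses the interval `[a, b)` and fixes
all other positions. The endpoints are cuts between positions, hence elements of `Fin (n + 1)`;
prefix reversals are the case `a = 0` and suffix reversals the case `b = Fin.last n`. -/
def intervalReversal (a b : Fin (n + 1)) : Perm (Fin n) :=
  Function.Involutive.toPerm
    (fun i => ⟨if (a : ℕ) ≤ i ∧ (i : ℕ) < b then a + b - 1 - i else i, by grind⟩)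
    (fun i => by grind)

theorem val_intervalReversal (a b : Fin (n + 1)) (i : Fin n) :
    (intervalReversal a b i : ℕ) = if (a : ℕ) ≤ i ∧ (i : ℕ) < b then (a + b - 1 - i : ℕ) else i :=
  rfl

theorem intervalReversal_mul_self (a b : Fin (n + 1)) :
    intervalReversal a b * intervalReversal a b = 1 :=
  Equiv.ext (Function.Involutive.toPerm_involutive _)

theorem intervalReversal_succAbove (a b : Fin (n + 2)) (p : Fin (n + 1)) (i : Fin n) :
    intervalReversal a b (p.succAbove i) =
      (intervalReversal a b p).succAbove
        (intervalReversal (p.predAbove a) (p.predAbove b) i) := by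
  simp only [Fin.ext_iff, Fin.succAbove, Fin.predAbove, Fin.lt_def, val_intervalReversal,
    apply_dite Fin.val, apply_ite Fin.val, Fin.val_castSucc, Fin.val_succ, Fin.val_pred,
    Fin.coe_castPred]
  grind

theorem swap_castSucc_succ_eq_intervalReversal_conj (i : Fin n) :
    swap i.castSucc i.succ =
      intervalReversal 0 i.succ.succ * intervalReversal 0 ⟨2, by have := i.pos; lia⟩ *
        intervalReversal 0 i.succ.succ := by
  ext j
  simp only [Perm.mul_apply, val_intervalReversal, swap_apply_def, Fin.ext_iff,
    apply_ite Fin.val, Fin.val_castSucc, Fin.val_succ, Fin.val_zero]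
  grind

end IntervalReversal

section PrefixSuffixGraph

variable {n : ℕ}

theorem prefixRev_iff_exists_eq_mul {π τ : Perm (Fin n)} :
    PrefixRev n π τ ↔ ∃ t, π = τ * intervalReversal 0 t := by
  constructor
  · rintro ⟨t, ht, hfix, hrev⟩
    refine ⟨⟨t, by lia⟩, Equiv.ext fun i => ?_⟩
    rcases lt_or_ge (i : ℕ) t with hi | hi
    · exact (hrev i hi).trans (congrArg τ (by grind [val_intervalReversal]))
    · exact (hfix i hi).trans (congrArg τ (by grind [val_intervalReversal]))
  · rintro ⟨t, rfl⟩
    exact ⟨t, by lia, fun i hi => congrArg τ (by grind [val_intervalReversal]),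
      fun i hi => congrArg τ (by grind [val_intervalReversal])⟩

theorem suffixRev_iff_exists_eq_mul {π τ : Perm (Fin n)} :
    SuffixRev n π τ ↔ ∃ t, π = τ * intervalReversal t (Fin.last n) := by
  constructor
  · rintro ⟨t, hfix, hrev⟩
    -- `SuffixRev` does not bound `t`, but all cuts `t ≥ n` describe the trivial reversal.
    refine ⟨⟨min t n, by lia⟩, Equiv.ext fun i => ?_⟩
    rcases lt_or_ge (i : ℕ) t with hi | hi
    · exact (hfix i hi).trans (congrArg τ (by grind [val_intervalReversal]))
    · exact (hrev i hi).trans (congrArg τ (by grind [val_intervalReversal]))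
  · rintro ⟨t, rfl⟩
    exact ⟨t, fun i hi => congrArg τ (by grind [val_intervalReversal]),
      fun i hi => congrArg τ (by grind [val_intervalReversal])⟩

theorem prefixSuffixGraph_adj_iff {π τ : Perm (Fin n)} :
    (prefixSuffixGraph n).Adj π τ ↔ π ≠ τ ∧
      ∃ t, π = τ * intervalReversal 0 t ∨ π = τ * intervalReversal t (Fin.last n) := by
  have eq_mul_comm (a b : Fin (n + 1)) :
      τ = π * intervalReversal a b ↔ π = τ * intervalReversal a b := by
    constructor <;> rintro rfl <;> rw [mul_assoc, intervalReversal_mul_self, mul_one]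
  simp only [prefixSuffixGraph, SimpleGraph.fromRel_adj, prefixRev_iff_exists_eq_mul,
    suffixRev_iff_exists_eq_mul, eq_mul_comm, or_self, exists_or]

theorem reachable_mul_intervalReversal_zero (π : Perm (Fin n)) (t : Fin (n + 1)) :
    (prefixSuffixGraph n).Reachable π (π * intervalReversal 0 t) := by
  by_cases h : π * intervalReversal 0 t = π
  · rw [h]
  · exact (prefixSuffixGraph_adj_iff.2 ⟨h, t, .inl rfl⟩).reachable.symm

theorem prefixSuffixGraph_preconnected : (prefixSuffixGraph n).Preconnected := by
  cases n with
  | zero => exact .of_subsingleton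
  | succ n =>
    refine preconnected_of_reachable_mul (Perm.mclosure_swap_castSucc_succ n) ?_
    rintro _ ⟨i, rfl⟩ π
    simp only [swap_castSucc_succ_eq_intervalReversal_conj, ← mul_assoc]
    exact (reachable_mul_intervalReversal_zero _ _).trans <|
      (reachable_mul_intervalReversal_zero _ _).trans (reachable_mul_intervalReversal_zero _ _)

end PrefixSuffixGraph

section EraseMax

variable {k : ℕ}

/-- The map `ψ`: the word of `eraseMax π` is the word of `π` with its largest value `Fin.last k`
removed. The equivalence `finSuccAboveEquiv p` renumbers the positions other than `p`. -/
def eraseMax (π : Perm (Fin (k + 1))) : Perm (Fin k) :=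
  (finSuccAboveEquiv (π.symm (Fin.last k))).trans <|
    (π.subtypeEquiv fun _ => (Equiv.eq_symm_apply π).not).trans
      (finSuccAboveEquiv (Fin.last k)).symm

theorem castSucc_eraseMax (π : Perm (Fin (k + 1))) (i : Fin k) :
    (eraseMax π i).castSucc = π ((π.symm (Fin.last k)).succAbove i) := by
  simp [eraseMax, finSuccAboveEquiv_apply, finSuccAboveEquiv_symm_apply_last]

theorem filter_ne_finRange_succ (p : Fin (k + 1)) :
    (List.finRange (k + 1)).filter (· ≠ p) = (List.finRange k).map p.succAbove := by
  have sorted_filter := (List.pairwise_lt_finRange (k + 1)).filter (· ≠ p) |>.sortedLT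
  have sorted_map : ((List.finRange k).map p.succAbove).SortedLT :=
    ((List.pairwise_lt_finRange k).map _ fun _ _ h => p.strictMono_succAbove h).sortedLT
  refine sorted_filter.eq_of_mem_iff sorted_map fun i => ?_
  simp [Fin.exists_succAbove_eq_iff]

theorem deleteTop_iff_eraseMax_eq {π : Perm (Fin (k + 1))} {π' : Perm (Fin k)} :
    DeleteTop k π π' ↔ eraseMax π = π' := by
  have val_ne_iff (i : Fin (k + 1)) : (π i : ℕ) ≠ k ↔ i ≠ π.symm (Fin.last k) := by
    rw [Ne, Ne, Equiv.eq_symm_apply, Fin.ext_iff, Fin.val_last]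
  have filter_eq : (List.finRange (k + 1)).filter ((· != k) ∘ fun i => (π i : ℕ)) =
      (List.finRange k).map (π.symm (Fin.last k)).succAbove := by
    rw [← filter_ne_finRange_succ]
    exact List.filter_congr fun i _ => by grind
  rw [DeleteTop, List.filter_map, filter_eq, List.map_map, List.map_inj_left]
  simp [← castSucc_eraseMax, Equiv.ext_iff, Fin.ext_iff]

theorem eraseMax_mul_intervalReversal (τ : Perm (Fin (k + 1))) (a b : Fin (k + 2)) :
    ∃ p : Fin (k + 1), eraseMax (τ * intervalReversal a b) =
      eraseMax τ * intervalReversal (p.predAbove a) (p.predAbove b) := by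
  set p := (τ * intervalReversal a b).symm (Fin.last k) with hp
  have image_p : intervalReversal a b p = τ.symm (Fin.last k) := by
    rw [Equiv.eq_symm_apply, ← Perm.mul_apply, hp, Equiv.apply_symm_apply]
  refine ⟨p, Equiv.ext fun i => Fin.castSucc_injective k ?_⟩
  rw [castSucc_eraseMax, ← hp, Perm.mul_apply, Perm.mul_apply, castSucc_eraseMax,
    intervalReversal_succAbove, image_p]

theorem eraseMax_eq_or_adj {π τ : Perm (Fin (k + 1))}
    (h : (prefixSuffixGraph (k + 1)).Adj π τ) :
    eraseMax π = eraseMax τ ∨ (prefixSuffixGraph k).Adj (eraseMax π) (eraseMax τ) := by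
  refine or_iff_not_imp_left.2 fun hne => prefixSuffixGraph_adj_iff.2 ⟨hne, ?_⟩
  obtain ⟨-, t, rfl | rfl⟩ := prefixSuffixGraph_adj_iff.1 h
  · obtain ⟨p, hp⟩ := eraseMax_mul_intervalReversal τ 0 t
    exact ⟨p.predAbove t, .inl (by rw [hp, Fin.predAbove_right_zero])⟩
  · obtain ⟨p, hp⟩ := eraseMax_mul_intervalReversal τ t (Fin.last (k + 1))
    exact ⟨p.predAbove t, .inr (by rw [hp, Fin.predAbove_right_last])⟩

end EraseMax

/-- Let `ψ(π) ∈ S_k` be obtained from `π ∈ S_{k+1}` by deleting the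
entry equal to `k + 1`. If `π, τ` are adjacent in `G_{k+1}` then `ψ(π) = ψ(τ)` or
`ψ(π), ψ(τ)` are adjacent in `G_k`; consequently
`d_{G_k}(ψ(π), ψ(τ)) ≤ d_{G_{k+1}}(π, τ)`. -/
theorem statement_18 (k : ℕ) (hk : 1 ≤ k) :
    (∀ (π τ : Equiv.Perm (Fin (k + 1))) (π' τ' : Equiv.Perm (Fin k)),
      DeleteTop k π π' → DeleteTop k τ τ' →
      (prefixSuffixGraph (k + 1)).Adj π τ →
      π' = τ' ∨ (prefixSuffixGraph k).Adj π' τ') ∧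
    (∀ (π τ : Equiv.Perm (Fin (k + 1))) (π' τ' : Equiv.Perm (Fin k)),
      DeleteTop k π π' → DeleteTop k τ τ' →
      (prefixSuffixGraph k).dist π' τ' ≤ (prefixSuffixGraph (k + 1)).dist π τ) := by
  simp only [deleteTop_iff_eraseMax_eq]
  constructor
  · rintro π τ _ _ rfl rfl hadj
    exact eraseMax_eq_or_adj hadj
  · rintro π τ _ _ rfl rfl
    exact dist_le_dist_of_adj_imp (fun _ _ => eraseMax_eq_or_adj)
      (prefixSuffixGraph_preconnected π τ)
end
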